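/- arXiv:0806.4492 — 5 statements merged into one kernel-verified Lean document; each statement's English description precedes it below -/
import Mathlib

section
/- Let g ≥ 0 and let m_0, m_1, …, m_g be positive integers. Define e_i := gcd(m_0,…,m_i) and n_i := e_{i−1}/e_i for 1 ≤ i ≤ g (note e_i divides e_{i−1}, so n_i is a positive integer). Assume that for every i with 1 ≤ i ≤ g the element n_i·m_i lies in ⟨m_0,…,m_{i−1}⟩, the additive submonoid of ℕ generated by m_0,…,m_{i−1}. Then every element s of the additive submonoid ⟨m_0,…,m_g⟩ of ℕ admits a unique representation s = a_0·m_0 + a_1·m_1 + … + a_g·m_g with a_0 ∈ ℕ and 0 ≤ a_i < n_i for each 1 ≤ i ≤ g. -/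
/-!
The proof is by induction on `g`.

Existence: writing `s = t + k * m (g+1)` with `t` in the monoid generated by `m 0, …, m g`, divide `k`
by `n = n (g+1)`. The telescopic condition puts `n * m (g+1)` into that same monoid, so only the
remainder, which is `< n`, survives as coefficient of `m (g+1)` (`exists_add_mul_of_mem_closure`).

Uniqueness: `e g` divides each of `m 0, …, m g`, so two representations agree modulo `e g` up to
their last terms. As `n = e g / gcd (e g, m (g+1))`, the last coefficients are then congruent
modulo `n`, hence equal because both are `< n` (`eq_of_add_mul_eq_add_mul`). The remaining
coefficients are equal by induction.
-/

/-- Division with remainder of the last coefficient: this is where the telescopic condition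
makes representations with bounded coefficients exist. -/
lemma exists_add_mul_of_mem_closure (g n : ℕ) (m : ℕ → ℕ) (hn : 0 < n)
    (h : n * m (g + 1) ∈ AddSubmonoid.closure (m '' Set.Iic g))
    {s : ℕ} (hs : s ∈ AddSubmonoid.closure (m '' Set.Iic (g + 1))) :
    ∃ t ∈ AddSubmonoid.closure (m '' Set.Iic g), ∃ r < n, s = t + r * m (g + 1) := by
  have hset : m '' Set.Iic (g + 1) = m '' Set.Iic g ∪ {m (g + 1)} := by
    rw [← Set.image_singleton, ← Set.image_union]
    congr 1
    ext x
    simp only [Set.mem_Iic, Set.mem_union, Set.mem_singleton_iff]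
    omega
  rw [hset, AddSubmonoid.closure_union, AddSubmonoid.mem_sup] at hs
  obtain ⟨t, ht, z, hz, rfl⟩ := hs
  obtain ⟨k, rfl⟩ := AddSubmonoid.mem_closure_singleton.mp hz
  refine ⟨t + (k / n) • (n * m (g + 1)), add_mem ht (nsmul_mem h _), k % n,
    Nat.mod_lt _ hn, ?_⟩
  conv_lhs => rw [← Nat.div_add_mod k n]
  simp only [smul_eq_mul]
  ring

/-- The last coefficient is determined modulo `e / gcd (e, c)` by the residue modulo `e`. -/
lemma eq_of_add_mul_eq_add_mul {e c x y a b : ℕ} (he : 0 < e) (hx : e ∣ x) (hy : e ∣ y)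
    (ha : a < e / Nat.gcd e c) (hb : b < e / Nat.gcd e c) (h : x + a * c = y + b * c) :
    a = b := by
  have hmod : a * c ≡ b * c [MOD e] := by
    have hxy : x ≡ y [MOD e] :=
      ((Nat.modEq_zero_iff_dvd).mpr hx).trans ((Nat.modEq_zero_iff_dvd).mpr hy).symm
    exact Nat.ModEq.add_left_cancel hxy (by rw [h])
  exact (Nat.ModEq.cancel_right_div_gcd he hmod).eq_of_lt_of_lt ha hb

/-- for a telescopic (free) numerical semigroup generated by
`m 0, …, m g` (with `e i = gcd(m 0, …, m i)`, `n i = e (i-1) / e i` and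
`n i * m i ∈ ⟨m 0, …, m (i-1)⟩`), every element of the semigroup has a unique
representation `s = ∑ a i * m i` with `a i < n i` for `1 ≤ i ≤ g`.
Here `e (i-1) = (Finset.range i).gcd m` and `e i = (Finset.range (i+1)).gcd m`. -/
theorem stmt_2 (g : ℕ) (m : ℕ → ℕ) (hpos : ∀ i ≤ g, 0 < m i)
    (htel : ∀ i, 1 ≤ i → i ≤ g →
      ((Finset.range i).gcd m / (Finset.range (i + 1)).gcd m) * m i ∈
        AddSubmonoid.closure (m '' Set.Iio i)) :
    ∀ s ∈ AddSubmonoid.closure (m '' Set.Iic g),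
      ∃! a : Fin (g + 1) → ℕ,
        (∀ i : Fin (g + 1), 1 ≤ (i : ℕ) →
          a i < (Finset.range (i : ℕ)).gcd m / (Finset.range ((i : ℕ) + 1)).gcd m) ∧
        s = ∑ i, a i * m (i : ℕ) := by
  induction g with
  | zero =>
    intro s hs
    have hset : m '' Set.Iic 0 = {m 0} := by
      rw [show Set.Iic 0 = {0} by ext x; simp, Set.image_singleton]
    rw [hset] at hs
    obtain ⟨k, rfl⟩ := AddSubmonoid.mem_closure_singleton.mp hs
    refine ⟨fun _ => k, ⟨fun i hi => by omega, by simp⟩, ?_⟩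
    rintro b ⟨-, hb⟩
    funext i
    obtain rfl : i = 0 := Fin.ext (by have := i.isLt; simp only [Fin.val_zero]; omega)
    rw [smul_eq_mul, Fin.sum_univ_castSucc, Fin.sum_univ_zero, zero_add] at hb
    exact (Nat.eq_of_mul_eq_mul_right (hpos 0 le_rfl) hb).symm
  | succ g ih =>
    intro s hs
    have ih' := ih (fun i hi => hpos i (by omega)) (fun i h1 h2 => htel i h1 (by omega))
    set e := (Finset.range (g + 1)).gcd m with he
    have hgcd : (Finset.range (g + 1 + 1)).gcd m = Nat.gcd e (m (g + 1)) := by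
      rw [Finset.range_add_one, Finset.gcd_insert, ← he, Nat.gcd_comm]
      rfl
    have he0 : 0 < e := by
      have hdvd : e ∣ m 0 := Finset.gcd_dvd (by simp)
      exact Nat.pos_of_dvd_of_pos hdvd (hpos 0 (by omega))
    have hn : 0 < e / Nat.gcd e (m (g + 1)) :=
      Nat.div_pos (Nat.le_of_dvd he0 (Nat.gcd_dvd_left _ _)) (Nat.gcd_pos_of_pos_left _ he0)
    have hdvd : ∀ a : Fin (g + 1) → ℕ, e ∣ ∑ i, a i * m (i : ℕ) := fun a =>
      Finset.dvd_sum fun i _ =>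
        Dvd.dvd.mul_left (Finset.gcd_dvd (Finset.mem_range.mpr i.isLt)) _
    have hmem := htel (g + 1) (by omega) le_rfl
    rw [hgcd, ← he, show Set.Iio (g + 1) = Set.Iic g by
      ext x; simp only [Set.mem_Iio, Set.mem_Iic]; omega] at hmem
    obtain ⟨t, ht, r, hr, rfl⟩ := exists_add_mul_of_mem_closure g _ m hn hmem hs
    obtain ⟨a, ⟨ha, hta⟩, huniq⟩ := ih' t ht
    refine ⟨Fin.snoc a r, ⟨?_, ?_⟩, ?_⟩
    · intro i
      refine Fin.lastCases ?_ (fun j => ?_) i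
      · intro _
        simpa only [Fin.snoc_last, Fin.val_last, hgcd, ← he] using hr
      · intro hj
        simpa only [Fin.snoc_castSucc, Fin.val_castSucc] using ha j hj
    · rw [Fin.sum_univ_castSucc, hta]
      simp only [Fin.snoc_castSucc, Fin.snoc_last, Fin.val_castSucc, Fin.val_last]
    · rintro b ⟨hb, hsb⟩
      rw [Fin.sum_univ_castSucc] at hsb
      simp only [Fin.val_castSucc, Fin.val_last] at hsb
      have hlast := hb (Fin.last (g + 1)) (by simp)
      simp only [Fin.val_last, hgcd, ← he] at hlast
      have hrb : r = b (Fin.last (g + 1)) :=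
        eq_of_add_mul_eq_add_mul he0 (hta ▸ hdvd a) (hdvd fun i => b i.castSucc) hr hlast hsb
      rw [← hrb] at hsb
      have hinit := huniq (fun i => b i.castSucc)
        ⟨fun i hi => hb i.castSucc hi, Nat.add_right_cancel hsb⟩
      funext i
      refine Fin.lastCases ?_ (fun j => ?_) i
      · rw [Fin.snoc_last, hrb]
      · rw [Fin.snoc_castSucc, ← hinit]
end

section
/- Let g ≥ 0 and let m_0, m_1, …, m_g be positive integers. Define e_i := gcd(m_0,…,m_i) and n_i := e_{i−1}/e_i for 1 ≤ i ≤ g. Assume that for every i with 1 ≤ i ≤ g the element n_i·m_i lies in ⟨m_0,…,m_{i−1}⟩, the additive submonoid of ℕ generated by m_0,…,m_{i−1}. Let S := ⟨m_0,…,m_g⟩ and let H(t) := ∑_{s ∈ S} t^s be the formal power series in ℤ[[t]] whose coefficient at t^s is 1 if s ∈ S and 0 otherwise. Then in ℤ[[t]] one has the identity H(t)·∏_{i=0}^{g} (1 − t^{m_i}) = ∏_{i=1}^{g} (1 − t^{n_i·m_i}). -/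
/-!
The proof is by induction on `g`: adjoining one generator `a` to a submonoid `T ⊆ ℕ` all of whose
elements are divisible by `d > 0`, with `n = d / gcd(a, d)` and `n * a ∈ T`, changes the generating
series according to `H_{T + ℕa} · (1 - X ^ a) = H_T · (1 - X ^ (n * a))` (`genSeries_sup_mul`).

Comparing coefficients, this says that `s` lies in `T + ℕa` while `s - a` does not exactly when
`s` lies in `T` while `s - n * a` does not. The only step that uses divisibility: if `s ∈ T` and
`s = t + (k + 1) * a` with `t ∈ T`, then `d ∣ (k + 1) * a`, hence `n ∣ k + 1`, so that `s - n * a`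
is `t` plus a multiple of `n * a` and therefore lies in `T`.

For `g = 0` the identity is the geometric series `H_{ℕa} · (1 - X ^ a) = 1`.
-/

open scoped Classical

/-- The generating series `∑_{s ∈ S} X ^ s` of a submonoid `S` of `ℕ`. -/
noncomputable def genSeries (S : AddSubmonoid ℕ) : PowerSeries ℤ :=
  PowerSeries.mk fun s : ℕ => if s ∈ S then (1 : ℤ) else 0

theorem coeff_genSeries_mul (S : AddSubmonoid ℕ) (a s : ℕ) :
    PowerSeries.coeff s (genSeries S * (1 - (PowerSeries.X : PowerSeries ℤ) ^ a)) =
      (if s ∈ S then (1 : ℤ) else 0) - if a ≤ s ∧ s - a ∈ S then 1 else 0 := by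
  rw [mul_sub, mul_one, map_sub, PowerSeries.coeff_mul_X_pow', genSeries, PowerSeries.coeff_mk,
    PowerSeries.coeff_mk, ite_and]

theorem mem_sup_closure_singleton {T : AddSubmonoid ℕ} {a s : ℕ} :
    s ∈ T ⊔ AddSubmonoid.closure {a} ↔ ∃ t ∈ T, ∃ k : ℕ, t + k * a = s := by
  simp [AddSubmonoid.mem_sup, AddSubmonoid.mem_closure_singleton]

theorem genSeries_closure_singleton_mul {a : ℕ} (ha : 0 < a) :
    genSeries (AddSubmonoid.closure {a}) * (1 - (PowerSeries.X : PowerSeries ℤ) ^ a) = 1 := by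
  have hmem : ∀ s, s ∈ AddSubmonoid.closure {a} ↔ a ∣ s := fun s => by
    simp only [AddSubmonoid.mem_closure_singleton, smul_eq_mul, dvd_def, mul_comm a, eq_comm]
  ext s
  rw [coeff_genSeries_mul, PowerSeries.coeff_one]
  simp only [hmem]
  rcases Nat.eq_zero_or_pos s with rfl | hs
  · simp [ha.ne']
  · have h : a ∣ s ↔ a ≤ s ∧ a ∣ s - a :=
      ⟨fun h => ⟨Nat.le_of_dvd hs h, Nat.dvd_sub h dvd_rfl⟩,
        fun h => (Nat.dvd_sub_iff_left h.1 dvd_rfl).1 h.2⟩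
    simp only [← h, sub_self, hs.ne', if_false]

/-- The effect on the generating series of adjoining one generator `a` to `T`, where
`n = d / gcd(a, d)`. -/
theorem genSeries_sup_mul {T : AddSubmonoid ℕ} {a d : ℕ} (hd : 0 < d)
    (hT : ∀ t ∈ T, d ∣ t) (hn : d / Nat.gcd a d * a ∈ T) :
    genSeries (T ⊔ AddSubmonoid.closure {a}) * (1 - (PowerSeries.X : PowerSeries ℤ) ^ a) =
      genSeries T * (1 - (PowerSeries.X : PowerSeries ℤ) ^ (d / Nat.gcd a d * a)) := by
  have hgpos : 0 < Nat.gcd a d := Nat.gcd_pos_of_pos_right a hd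
  have hnpos : 0 < d / Nat.gcd a d :=
    Nat.div_pos (Nat.le_of_dvd hd (Nat.gcd_dvd_right a d)) hgpos
  -- `d ∣ k * a` gives `n ∣ k`, since `n = d / gcd(a, d)` and `a / gcd(a, d)` are coprime.
  have hdvd : ∀ k, d ∣ k * a → d / Nat.gcd a d ∣ k := fun k hk => by
    refine (Nat.coprime_div_gcd_div_gcd hgpos).symm.dvd_of_dvd_mul_right (m := k) ?_
    rw [← Nat.mul_div_assoc k (Nat.gcd_dvd_left a d)]
    exact Nat.div_dvd_div (Nat.gcd_dvd_right a d) hk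
  generalize d / Nat.gcd a d = n at *
  set S := T ⊔ AddSubmonoid.closure {a} with hS
  have hTS : ∀ {s}, s ∈ T → s ∈ S := fun h => (le_sup_left : T ≤ S) h
  have haS : a ∈ S := (le_sup_right : _ ≤ S) (AddSubmonoid.subset_closure rfl)
  have h1 : ∀ s, a ≤ s ∧ s - a ∈ S → s ∈ S := fun s h => by
    simpa [Nat.sub_add_cancel h.1] using S.add_mem h.2 haS
  have h2 : ∀ s, n * a ≤ s ∧ s - n * a ∈ T → s ∈ T := fun s h => by
    simpa [Nat.sub_add_cancel h.1] using T.add_mem h.2 hn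
  have h3 : ∀ s, s ∈ S → s ∉ T → a ≤ s ∧ s - a ∈ S := fun s hs hsT => by
    obtain ⟨t, ht, k, rfl⟩ := mem_sup_closure_singleton.1 hs
    obtain _ | k := k
    · simp [ht] at hsT
    · have : t + (k + 1) * a = (t + k * a) + a := by ring
      rw [this, Nat.add_sub_cancel]
      exact ⟨Nat.le_add_left _ _, mem_sup_closure_singleton.2 ⟨t, ht, k, rfl⟩⟩
  have h4 : ∀ s, n * a ≤ s ∧ s - n * a ∈ T → a ≤ s ∧ s - a ∈ S := fun s h => by
    obtain ⟨r, rfl⟩ := Nat.exists_eq_add_of_le' h.1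
    obtain ⟨p, rfl⟩ := Nat.exists_eq_add_of_le' hnpos
    rw [Nat.add_sub_cancel] at h
    have : r + (p + 1) * a = (r + p * a) + a := by ring
    rw [this, Nat.add_sub_cancel]
    exact ⟨Nat.le_add_left _ _, mem_sup_closure_singleton.2 ⟨r, h.2, p, rfl⟩⟩
  have h5 : ∀ s, s ∈ T → a ≤ s ∧ s - a ∈ S → n * a ≤ s ∧ s - n * a ∈ T := fun s hs h => by
    obtain ⟨r, rfl⟩ := Nat.exists_eq_add_of_le' h.1
    rw [Nat.add_sub_cancel] at h
    obtain ⟨t, ht, k, rfl⟩ := mem_sup_closure_singleton.1 h.2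
    have e : t + k * a + a = t + (k + 1) * a := by ring
    rw [e] at hs ⊢
    obtain ⟨j, hj⟩ := hdvd (k + 1) ((Nat.dvd_add_right (hT t ht)).1 (hT _ hs))
    obtain _ | j := j
    -- `j = 0` is impossible because `k + 1 = n * j` is positive.
    · omega
    · have e' : t + (k + 1) * a = (t + j • (n * a)) + n * a := by
        rw [hj, smul_eq_mul]; ring
      rw [e', Nat.add_sub_cancel]
      exact ⟨Nat.le_add_left _ _, T.add_mem ht (T.nsmul_mem hn j)⟩
  ext s
  rw [coeff_genSeries_mul, coeff_genSeries_mul]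
  by_cases hs : s ∈ T
  · have h : (a ≤ s ∧ s - a ∈ S) ↔ (n * a ≤ s ∧ s - n * a ∈ T) := ⟨h5 s hs, h4 s⟩
    rw [if_pos hs, if_pos (hTS hs), if_congr h rfl rfl]
  · have h : s ∈ S ↔ (a ≤ s ∧ s - a ∈ S) := ⟨fun h => h3 s h hs, h1 s⟩
    rw [if_neg hs, if_neg (mt (h2 s) hs), if_congr h rfl rfl, sub_self, sub_self]

/-- for a telescopic (free) numerical semigroup `S = ⟨m 0, …, m g⟩`
(with `e i = gcd(m 0, …, m i)`, `n i = e (i-1) / e i` and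
`n i * m i ∈ ⟨m 0, …, m (i-1)⟩`), the generating series `H(t) = ∑_{s ∈ S} t^s`
satisfies `H(t) · ∏_{i=0}^{g} (1 - t^(m i)) = ∏_{i=1}^{g} (1 - t^(n i * m i))`
in `ℤ[[t]]`. Here `e (i-1) = (Finset.range i).gcd m`. -/
theorem stmt_3 (g : ℕ) (m : ℕ → ℕ) (hpos : ∀ i ≤ g, 0 < m i)
    (htel : ∀ i, 1 ≤ i → i ≤ g →
      ((Finset.range i).gcd m / (Finset.range (i + 1)).gcd m) * m i ∈
        AddSubmonoid.closure (m '' Set.Iio i)) :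
    (PowerSeries.mk fun s : ℕ =>
        if s ∈ AddSubmonoid.closure (m '' Set.Iic g) then (1 : ℤ) else 0) *
        ∏ i ∈ Finset.range (g + 1), (1 - (PowerSeries.X : PowerSeries ℤ) ^ m i) =
      ∏ i ∈ Finset.Icc 1 g,
        (1 - (PowerSeries.X : PowerSeries ℤ) ^
          (((Finset.range i).gcd m / (Finset.range (i + 1)).gcd m) * m i)) := by
  change genSeries _ * _ = _
  induction g with
  | zero =>
    have h : m '' Set.Iic 0 = {m 0} := by rw [show Set.Iic 0 = {0} by ext; simp, Set.image_singleton]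
    simpa [h] using genSeries_closure_singleton_mul (hpos 0 le_rfl)
  | succ g ih =>
    have ih := ih (fun i hi => hpos i (by omega)) fun i h1 hi => htel i h1 (by omega)
    have hIio : Set.Iio (g + 1) = Set.Iic g := by ext; simp
    have hIic : Set.Iic (g + 1) = Set.Iic g ∪ {g + 1} := by ext; simp; omega
    have hgcd : (Finset.range (g + 1 + 1)).gcd m =
        Nat.gcd (m (g + 1)) ((Finset.range (g + 1)).gcd m) := by
      rw [Finset.range_add_one (n := g + 1), Finset.gcd_insert]; rfl
    have htop := htel (g + 1) (by omega) le_rfl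
    rw [hIio, hgcd] at htop
    have hd : 0 < (Finset.range (g + 1)).gcd m :=
      Nat.pos_of_dvd_of_pos (Finset.gcd_dvd (by simp)) (hpos 0 (by omega))
    have hT : ∀ t ∈ AddSubmonoid.closure (m '' Set.Iic g), (Finset.range (g + 1)).gcd m ∣ t := by
      intro t ht
      induction ht using AddSubmonoid.closure_induction with
      | mem x hx =>
        obtain ⟨i, hi, rfl⟩ := hx
        exact Finset.gcd_dvd (Finset.mem_range.2 (Nat.lt_succ_of_le hi))
      | zero => exact dvd_zero _
      | add x y _ _ hx hy => exact dvd_add hx hy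
    have key := genSeries_sup_mul hd hT htop
    rw [Finset.prod_range_succ, Finset.prod_Icc_succ_top (by omega), ← ih, hgcd, hIic,
      Set.image_union, Set.image_singleton, AddSubmonoid.closure_union]
    linear_combination
      (∏ i ∈ Finset.range (g + 1), (1 - (PowerSeries.X : PowerSeries ℤ) ^ m i)) * key
end

section
/- Let ℓ ≥ 1 and let m_0 < m_1 < … < m_ℓ be positive integers. Define e_i := gcd(m_0,…,m_i) and n_i := e_{i−1}/e_i for 1 ≤ i ≤ ℓ. Assume that for every i with 1 ≤ i ≤ ℓ−1 one has: n_i ≥ 2, n_i·m_i ∈ ⟨m_0,…,m_{i−1}⟩, and m_{i+1} > n_i·m_i. Assume moreover that either e_{ℓ−1} = 1 or e_{ℓ−1} does not divide m_ℓ. Then m_ℓ belongs to the additive submonoid ⟨m_0,…,m_{ℓ−1}⟩ of ℕ if and only if e_{ℓ−1} = 1. -/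
/-!
Membership in the monoid forces divisibility by the gcd, so a non-divisible `m ℓ` is excluded.
Conversely, every multiple `a ≥ m k` of `gcd(m 0, …, m (k-1))` lies in `⟨m 0, …, m (k-1)⟩`
(`mem_closure_of_gcd_dvd`), by induction on `k`: a multiple `a ≥ m (k+1)` of `gcd(m 0, …, m k)`
has the form `a = c * m k + b`, where `c < n k` is chosen so that `gcd(m 0, …, m (k-1))`
divides `b`. The gap condition `n k * m k < m (k+1)` gives `b ≥ m k`, so the induction hypothesis
applies to `b`. With `k = ℓ`, `a = m ℓ` and gcd `1` this is the remaining implication.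
-/

/-- The congruence `c * M ≡ a` modulo `E` is solvable when `gcd(M, E) ∣ a`, and the least solution
is smaller than `E / gcd(M, E)`. -/
lemma exists_lt_mul_modEq {M E a : ℕ} (hE : 0 < E) (h : Nat.gcd M E ∣ a) :
    ∃ c < E / Nat.gcd M E, c * M ≡ a [MOD E] := by
  have hg : 0 < Nat.gcd M E := Nat.gcd_pos_of_pos_right _ hE
  obtain ⟨g, M', E', hg0, hco, hM, hE'⟩ := Nat.exists_coprime' hg
  have hgg : Nat.gcd M E = g := by
    rw [hM, hE', Nat.gcd_mul_right, hco.gcd_eq_one, one_mul]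
  rw [hgg] at h ⊢
  obtain ⟨a', rfl⟩ := h
  subst hM hE'
  have hE0 : 0 < E' := Nat.pos_of_mul_pos_right hE
  rw [Nat.mul_div_cancel _ hg0]
  obtain ⟨x, hx1, hx2⟩ := Nat.chineseRemainder hco 0 a'
  obtain ⟨y, rfl⟩ := (Nat.modEq_zero_iff_dvd.mp hx1)
  refine ⟨y % E', Nat.mod_lt _ hE0, ?_⟩
  have h1 : y % E' * M' ≡ a' [MOD E'] :=
    ((Nat.mod_modEq y E').mul_right M').trans (by rwa [mul_comm])
  have h2 := h1.mul_right' g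
  rwa [mul_assoc, mul_comm a' g] at h2

/-- A multiple of `gcd(m 0, …, m (k-1))` that is at least `m k` lies in
`⟨m 0, …, m (k-1)⟩`. -/
lemma mem_closure_of_gcd_dvd (m : ℕ → ℕ) (h0 : 0 < m 0) (k : ℕ) (hk : 1 ≤ k)
    (hgap : ∀ i, 1 ≤ i → i < k →
      ((Finset.range i).gcd m / (Finset.range (i + 1)).gcd m) * m i < m (i + 1))
    (a : ℕ) (hdvd : (Finset.range k).gcd m ∣ a) (ha : m k ≤ a) :
    a ∈ AddSubmonoid.closure (m '' Set.Iio k) := by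
  induction k, hk using Nat.le_induction generalizing a with
  | base =>
    have hd : m 0 ∣ a := by simpa using hdvd
    obtain ⟨t, rfl⟩ := hd
    rw [mul_comm, ← smul_eq_mul]
    exact AddSubmonoid.nsmul_mem _ (AddSubmonoid.subset_closure (Set.mem_image_of_mem m (by simp))) t
  | succ k hk ih =>
    have hgcd : (Finset.range (k + 1)).gcd m = Nat.gcd (m k) ((Finset.range k).gcd m) := by
      rw [Finset.range_add_one, Finset.gcd_insert]; rfl
    have hE : 0 < (Finset.range k).gcd m :=
      Nat.pos_of_dvd_of_pos (Finset.gcd_dvd (Finset.mem_range.mpr hk)) h0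
    have hg := hgap k hk (Nat.lt_succ_self k)
    rw [hgcd] at hdvd hg
    obtain ⟨c, hc, hmod⟩ := exists_lt_mul_modEq hE hdvd
    have hle : (c + 1) * m k ≤ a := (Nat.mul_le_mul_right _ hc).trans (hg.le.trans ha)
    rw [add_mul, one_mul] at hle
    have hb := ih (fun i h1 h2 => hgap i h1 (by omega)) (a - c * m k)
      ((Nat.modEq_iff_dvd' (by omega)).mp hmod) (by omega)
    rw [show a = c • m k + (a - c * m k) by rw [smul_eq_mul]; omega]
    refine add_mem (AddSubmonoid.nsmul_mem _
      (AddSubmonoid.subset_closure (Set.mem_image_of_mem m (by simp))) c)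
      (AddSubmonoid.closure_mono (Set.image_mono ?_) hb)
    exact Set.Iio_subset_Iio (Nat.le_succ k)


/-- arithmetic dichotomy: with `m 0 < … < m ℓ` positive,
`e i = gcd(m 0, …, m i)`, `n i = e (i-1) / e i`, assuming for `1 ≤ i ≤ ℓ - 1`
that `n i ≥ 2`, `n i * m i ∈ ⟨m 0, …, m (i-1)⟩` and `m (i+1) > n i * m i`,
and assuming `e (ℓ-1) = 1` or `e (ℓ-1) ∤ m ℓ`, one has:
`m ℓ ∈ ⟨m 0, …, m (ℓ-1)⟩` iff `e (ℓ-1) = 1`.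
Here `e (ℓ-1) = (Finset.range ℓ).gcd m`. -/
theorem stmt_5 (ℓ : ℕ) (hℓ : 1 ≤ ℓ) (m : ℕ → ℕ) (hpos : ∀ i ≤ ℓ, 0 < m i)
    (hmono : ∀ i, i < ℓ → m i < m (i + 1))
    (hn2 : ∀ i, 1 ≤ i → i ≤ ℓ - 1 →
      2 ≤ (Finset.range i).gcd m / (Finset.range (i + 1)).gcd m)
    (htel : ∀ i, 1 ≤ i → i ≤ ℓ - 1 →
      ((Finset.range i).gcd m / (Finset.range (i + 1)).gcd m) * m i ∈
        AddSubmonoid.closure (m '' Set.Iio i))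
    (hgap : ∀ i, 1 ≤ i → i ≤ ℓ - 1 →
      ((Finset.range i).gcd m / (Finset.range (i + 1)).gcd m) * m i < m (i + 1))
    (hlast : (Finset.range ℓ).gcd m = 1 ∨ ¬ (Finset.range ℓ).gcd m ∣ m ℓ) :
    m ℓ ∈ AddSubmonoid.closure (m '' Set.Iio ℓ) ↔ (Finset.range ℓ).gcd m = 1 := by
  constructor
  · intro h
    refine hlast.resolve_right (not_not_intro ?_)
    generalize m ℓ = y at h
    induction h using AddSubmonoid.closure_induction with
    | mem x hx =>
      obtain ⟨i, hi, rfl⟩ := hx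
      exact Finset.gcd_dvd (Finset.mem_range.mpr hi)
    | zero => exact dvd_zero _
    | add x y _ _ hx hy => exact dvd_add hx hy
  · intro h
    exact mem_closure_of_gcd_dvd m (hpos 0 (Nat.zero_le ℓ)) ℓ hℓ
      (fun i h1 h2 => hgap i h1 (by omega)) (m ℓ) (h ▸ one_dvd _) le_rfl
end

section
/- Let g ≥ 0 and g' ≥ 0, and let m_0 < m_1 < … < m_g and m'_0 < m'_1 < … < m'_{g'} be two tuples of positive integers, each satisfying the plane-branch semigroup conditions: with e_i := gcd(m_0,…,m_i) and n_i := e_{i−1}/e_i, one has n_i ≥ 2 and n_i·m_i ∈ ⟨m_0,…,m_{i−1}⟩ for all 1 ≤ i ≤ g, m_{i+1} > n_i·m_i for all 1 ≤ i ≤ g−1, and e_g = 1 (and similarly for the primed tuple with e'_i, n'_i). If the equality ∏_{i=1}^{g}(1 − t^{n_i m_i}) · ∏_{j=0}^{g'}(1 − t^{m'_j}) = ∏_{i=1}^{g'}(1 − t^{n'_i m'_i}) · ∏_{j=0}^{g}(1 − t^{m_j}) holds in the polynomial ring ℤ[t], then g = g' and m_i = m'_i for all 0 ≤ i ≤ g.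 -/
/-! The polynomials `1 - X ^ a` with `a > 0` are multiplicatively independent: a product of them
determines the multiset of exponents, because the largest exponent `a` is detected by a primitive
`a`-th root of unity (`multiset_eq_of_prod_eq`). The equality of Poincaré series therefore says
`{n i * m i} + {m' j} = {n' i * m' i} + {m j}` as multisets. Within one branch the exponents
`n i * m i` and `m j` never coincide, since `m i < n i * m i < m (i + 1)` (the upper bound for
`i < g`) and `m` is increasing (`numerator_ne_denominator`). Hence no cancellation happens between
numerator and denominator, so `{m j} = {m' j}` as multisets, and increasing tuples with the same
entries are equal. -/

/-- If the largest exponent `a` occurs among the exponents in `S`, it occurs among those in `T`: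
evaluate at a primitive `a`-th root of unity. -/
lemma mem_of_prod_eq {S T : Multiset ℕ} {a : ℕ} (ha : 0 < a) (haS : a ∈ S)
    (hT : ∀ t ∈ T, 0 < t ∧ t ≤ a)
    (h : (S.map fun s => 1 - (Polynomial.X : Polynomial ℤ) ^ s).prod =
      (T.map fun s => 1 - (Polynomial.X : Polynomial ℤ) ^ s).prod) : a ∈ T := by
  have hz := Complex.isPrimitiveRoot_exp a ha.ne'
  set z := Complex.exp (2 * Real.pi * Complex.I / a)
  have h2 := congrArg (Polynomial.aeval z) h
  simp only [map_multiset_prod, Multiset.map_map, Function.comp_def, map_sub, map_one, map_pow,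
    Polynomial.aeval_X] at h2
  have h0 : (S.map fun s => 1 - z ^ s).prod = 0 :=
    Multiset.prod_eq_zero (Multiset.mem_map.2 ⟨a, haS, by rw [hz.pow_eq_one, sub_self]⟩)
  rw [h0, eq_comm, Multiset.prod_eq_zero_iff, Multiset.mem_map] at h2
  obtain ⟨t, ht, hzt⟩ := h2
  have hdvd := hz.dvd_of_pow_eq_one t (sub_eq_zero.1 hzt).symm
  have := Nat.le_of_dvd (hT t ht).1 hdvd
  rwa [le_antisymm this (hT t ht).2]

/-- A product of polynomials `1 - X ^ s` with all `s > 0` determines the multiset of exponents. -/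
lemma multiset_eq_of_prod_eq (n : ℕ) : ∀ S T : Multiset ℕ, (S + T).card ≤ n →
    (∀ s ∈ S, 0 < s) → (∀ t ∈ T, 0 < t) →
    (S.map fun s => 1 - (Polynomial.X : Polynomial ℤ) ^ s).prod =
      (T.map fun s => 1 - (Polynomial.X : Polynomial ℤ) ^ s).prod → S = T := by
  induction n with
  | zero =>
    intro S T hc _ _ _
    have h0 : S + T = 0 := Multiset.card_eq_zero.1 (Nat.le_zero.1 hc)
    rw [add_eq_zero] at h0
    rw [h0.1, h0.2]
  | succ n ih =>
    intro S T hc hS hT h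
    by_cases hne : (S + T).toFinset.Nonempty
    · obtain ⟨a, ha, hmax⟩ := Finset.exists_max_image _ id hne
      simp only [Multiset.mem_toFinset, Multiset.mem_add, id] at ha hmax
      have hboth : a ∈ S ∧ a ∈ T := by
        rcases ha with ha | ha
        · exact ⟨ha, mem_of_prod_eq (hS a ha) ha (fun t ht => ⟨hT t ht, hmax t (.inr ht)⟩) h⟩
        · exact ⟨mem_of_prod_eq (hT a ha) ha (fun t ht => ⟨hS t ht, hmax t (.inl ht)⟩) h.symm, ha⟩
      obtain ⟨S, rfl⟩ := Multiset.exists_cons_of_mem hboth.1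
      obtain ⟨T, rfl⟩ := Multiset.exists_cons_of_mem hboth.2
      have ha0 := hS a hboth.1
      have hX : (1 - (Polynomial.X : Polynomial ℤ) ^ a) ≠ 0 := by
        intro h0
        have := congrArg (Polynomial.eval 0) h0
        simp [ha0.ne'] at this
      rw [Multiset.map_cons, Multiset.map_cons, Multiset.prod_cons, Multiset.prod_cons] at h
      rw [ih S T (by simp at hc ⊢; omega) (fun s hs => hS s (Multiset.mem_cons_of_mem hs))
        (fun t ht => hT t (Multiset.mem_cons_of_mem ht)) (mul_left_cancel₀ hX h)]
    · rw [Finset.not_nonempty_iff_eq_empty, Multiset.toFinset_eq_empty, add_eq_zero] at hne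
      rw [hne.1, hne.2]

lemma lt_of_step {g : ℕ} {m : ℕ → ℕ} (hmono : ∀ i, i < g → m i < m (i + 1)) {i j : ℕ}
    (hij : i < j) (hj : j ≤ g) : m i < m j := by
  induction j, hij using Nat.le_induction with
  | base => exact hmono i hj
  | succ j hij ih => exact (ih (by omega)).trans (hmono j hj)

/-- For one branch, no exponent `n i * m i` of the numerator of the Poincaré series equals an
exponent `m j` of its denominator: `n i * m i` lies strictly between `m i` and `m (i + 1)`. -/
lemma numerator_ne_denominator {g : ℕ} {m n : ℕ → ℕ} (hpos : ∀ i ≤ g, 0 < m i)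
    (hmono : ∀ i, i < g → m i < m (i + 1)) (hn2 : ∀ i, 1 ≤ i → i ≤ g → 2 ≤ n i)
    (hgap : ∀ i, 1 ≤ i → i ≤ g - 1 → n i * m i < m (i + 1)) {i j : ℕ}
    (hi : 1 ≤ i) (hig : i ≤ g) (hj : j ≤ g) : n i * m i ≠ m j := by
  rcases le_or_gt j i with hji | hij
  · have h1 : m j ≤ m i := by
      rcases hji.eq_or_lt with rfl | h
      · exact le_rfl
      · exact (lt_of_step hmono h hig).le
    have := hpos i hig
    have := hn2 i hi hig
    nlinarith
  · have h1 : m (i + 1) ≤ m j := by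
      rcases (Nat.succ_le_of_lt hij).eq_or_lt with h | h
      · exact (congrArg m h).le
      · exact (lt_of_step hmono h hj).le
    exact ((hgap i hi (by omega)).trans_le h1).ne

/-- Equal formal differences `M - A = M' - A'` of multisets without cancellation have equal
positive parts. -/
lemma eq_of_add_eq_add_of_disjoint {A M A' M' : Multiset ℕ} (h : A + M' = A' + M)
    (hd : ∀ a ∈ A, a ∉ M) (hd' : ∀ a ∈ A', a ∉ M') : M = M' := by
  ext c
  have hc := congrArg (Multiset.count c) h
  rw [Multiset.count_add, Multiset.count_add] at hc
  have h1 := hd c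
  have h2 := hd' c
  simp only [← Multiset.count_pos] at h1 h2
  omega


/-- the Poincaré series of a plane branch determines its semigroup.
Two tuples `m 0 < … < m g` and `m' 0 < … < m' g'` of positive integers, each
satisfying the plane-branch semigroup conditions (`n i ≥ 2`,
`n i * m i ∈ ⟨m 0, …, m (i-1)⟩` for `1 ≤ i ≤ g`, `m (i+1) > n i * m i` for
`1 ≤ i ≤ g - 1`, and `e g = 1`), whose rational expressions
`∏_{i=1}^{g}(1 - t^(n i * m i)) / ∏_{j=0}^{g}(1 - t^(m j))` agree (after clearing
denominators, as polynomials over ℤ) must be equal.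
Here `e (i-1) = (Finset.range i).gcd m` and `n i = e (i-1) / e i`. -/
theorem stmt_6 (g g' : ℕ) (m m' : ℕ → ℕ)
    (hpos : ∀ i ≤ g, 0 < m i) (hpos' : ∀ i ≤ g', 0 < m' i)
    (hmono : ∀ i, i < g → m i < m (i + 1)) (hmono' : ∀ i, i < g' → m' i < m' (i + 1))
    (hn2 : ∀ i, 1 ≤ i → i ≤ g →
      2 ≤ (Finset.range i).gcd m / (Finset.range (i + 1)).gcd m)
    (hn2' : ∀ i, 1 ≤ i → i ≤ g' →
      2 ≤ (Finset.range i).gcd m' / (Finset.range (i + 1)).gcd m')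
    (htel : ∀ i, 1 ≤ i → i ≤ g →
      ((Finset.range i).gcd m / (Finset.range (i + 1)).gcd m) * m i ∈
        AddSubmonoid.closure (m '' Set.Iio i))
    (htel' : ∀ i, 1 ≤ i → i ≤ g' →
      ((Finset.range i).gcd m' / (Finset.range (i + 1)).gcd m') * m' i ∈
        AddSubmonoid.closure (m' '' Set.Iio i))
    (hgap : ∀ i, 1 ≤ i → i ≤ g - 1 →
      ((Finset.range i).gcd m / (Finset.range (i + 1)).gcd m) * m i < m (i + 1))
    (hgap' : ∀ i, 1 ≤ i → i ≤ g' - 1 →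
      ((Finset.range i).gcd m' / (Finset.range (i + 1)).gcd m') * m' i < m' (i + 1))
    (he : (Finset.range (g + 1)).gcd m = 1) (he' : (Finset.range (g' + 1)).gcd m' = 1)
    (heq :
      (∏ i ∈ Finset.Icc 1 g, (1 - (Polynomial.X : Polynomial ℤ) ^
          (((Finset.range i).gcd m / (Finset.range (i + 1)).gcd m) * m i))) *
        ∏ j ∈ Finset.range (g' + 1), (1 - (Polynomial.X : Polynomial ℤ) ^ m' j) =
      (∏ i ∈ Finset.Icc 1 g', (1 - (Polynomial.X : Polynomial ℤ) ^
          (((Finset.range i).gcd m' / (Finset.range (i + 1)).gcd m') * m' i))) *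
        ∏ j ∈ Finset.range (g + 1), (1 - (Polynomial.X : Polynomial ℤ) ^ m j)) :
    g = g' ∧ ∀ i ≤ g, m i = m' i := by
  have hA : ∀ (g : ℕ) (f : ℕ → ℕ), (∏ i ∈ Finset.Icc 1 g, (1 - (Polynomial.X : Polynomial ℤ) ^ f i))
      = (((Finset.Icc 1 g).val.map f).map fun s => 1 - (Polynomial.X : Polynomial ℤ) ^ s).prod := by
    intro g f; rw [Multiset.map_map]; rfl
  have hM : ∀ (g : ℕ) (f : ℕ → ℕ),
      (∏ i ∈ Finset.range g, (1 - (Polynomial.X : Polynomial ℤ) ^ f i))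
      = (((Finset.range g).val.map f).map fun s => 1 - (Polynomial.X : Polynomial ℤ) ^ s).prod := by
    intro g f; rw [Multiset.map_map]; rfl
  -- Abbreviate the quotients of gcds as `n i` and `n' i`.
  generalize hn : (fun i => (Finset.range i).gcd m / (Finset.range (i + 1)).gcd m) = n at *
  generalize hn' : (fun i => (Finset.range i).gcd m' / (Finset.range (i + 1)).gcd m') = n' at *
  simp only [funext_iff] at hn hn'
  simp only [hn, hn'] at hn2 hn2' hgap hgap' heq
  rw [hA g (fun i => n i * m i), hA g' (fun i => n' i * m' i), hM, hM, ← Multiset.prod_add,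
    ← Multiset.prod_add, ← Multiset.map_add, ← Multiset.map_add] at heq
  have hms := multiset_eq_of_prod_eq _ _ _ le_rfl ?_ ?_ heq
  · have hMM := eq_of_add_eq_add_of_disjoint hms ?_ ?_
    · have hcard : g = g' := by simpa using congrArg Multiset.card hMM
      subst hcard
      refine ⟨rfl, fun i hi => ?_⟩
      have hfin : (fun k : Fin (g + 1) => m k) = fun k : Fin (g + 1) => m' k := by
        refine (StrictMono.range_inj (β := Fin (g + 1))
          (fun a b hab => lt_of_step hmono hab (Nat.le_of_lt_succ b.isLt))
          (fun a b hab => lt_of_step hmono' hab (Nat.le_of_lt_succ b.isLt))).1 (Set.ext fun x => ?_)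
        have hx : x ∈ (Finset.range (g + 1)).val.map m ↔ x ∈ (Finset.range (g + 1)).val.map m' := by
          rw [hMM]
        simp only [Multiset.mem_map, Finset.mem_val, Finset.mem_range] at hx
        simpa only [Set.mem_range, Fin.exists_iff, exists_prop] using hx
      exact congrFun hfin ⟨i, by omega⟩
    · intro a ha hb
      simp only [Multiset.mem_map, Finset.mem_val, Finset.mem_Icc, Finset.mem_range] at ha hb
      obtain ⟨i, hi, rfl⟩ := ha
      obtain ⟨j, hj, hji⟩ := hb
      exact numerator_ne_denominator hpos hmono hn2 hgap hi.1 hi.2 (by omega) hji.symm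
    · intro a ha hb
      simp only [Multiset.mem_map, Finset.mem_val, Finset.mem_Icc, Finset.mem_range] at ha hb
      obtain ⟨i, hi, rfl⟩ := ha
      obtain ⟨j, hj, hji⟩ := hb
      exact numerator_ne_denominator hpos' hmono' hn2' hgap' hi.1 hi.2 (by omega) hji.symm
  · intro s hs
    simp only [Multiset.mem_add, Multiset.mem_map, Finset.mem_val, Finset.mem_Icc,
      Finset.mem_range] at hs
    rcases hs with ⟨i, hi, rfl⟩ | ⟨i, hi, rfl⟩
    · exact Nat.mul_pos (by have := hn2 i hi.1 hi.2; omega) (hpos i hi.2)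
    · exact hpos' i (by omega)
  · intro s hs
    simp only [Multiset.mem_add, Multiset.mem_map, Finset.mem_val, Finset.mem_Icc,
      Finset.mem_range] at hs
    rcases hs with ⟨i, hi, rfl⟩ | ⟨i, hi, rfl⟩
    · exact Nat.mul_pos (by have := hn2' i hi.1 hi.2; omega) (hpos' i hi.2)
    · exact hpos i (by omega)
end

section
/- Let ℓ ≥ 1 and ℓ' ≥ 1, and let m_0 < m_1 < … < m_ℓ and m'_0 < m'_1 < … < m'_{ℓ'} be two tuples of positive integers such that, with e_i := gcd(m_0,…,m_i) and n_i := e_{i−1}/e_i, one has n_i ≥ 2, n_i·m_i ∈ ⟨m_0,…,m_{i−1}⟩ and m_{i+1} > n_i·m_i for all 1 ≤ i ≤ ℓ−1 (and similarly for the primed tuple with e'_i, n'_i). If the equality ∏_{i=1}^{ℓ−1}(1 − t^{n_i m_i}) · ∏_{j=0}^{ℓ'}(1 − t^{m'_j}) = ∏_{i=1}^{ℓ'−1}(1 − t^{n'_i m'_i}) · ∏_{j=0}^{ℓ}(1 − t^{m_j}) holds in the polynomial ring ℤ[t], then ℓ = ℓ' and m_i = m'_i for all 0 ≤ i ≤ ℓ.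 -/
/-!
A product `∏ (1 - X ^ a)` over a multiset of positive exponents determines the multiset: if `a` is
the largest exponent occurring on either side of an equality of two such products, a primitive
`a`-th root of unity is a root of both sides, so `a` occurs on both sides and its factor can be
cancelled (`prod_one_sub_X_pow_injective`). Hence the given identity says that
`{n i * m i} + {m' j} = {n' i * m' i} + {m j}` as multisets.

Moreover `m i < n i * m i < m (i + 1)`, so no `n i * m i` equals an `m j`, and the fraction has no
cancellation. Comparing memberships, the sets `{m j}` and `{m' j}` coincide, and a strictly
increasing enumeration of a finite set is unique.
-/

open Polynomial in
/-- Evaluation at a primitive `a`-th root of unity: each factor `1 - X ^ a` with `a > 0` of a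
product of such factors forces a multiple of `a` among the exponents of any equal product. -/
lemma exists_dvd_of_prod_eq {s t : Multiset ℕ} {a : ℕ} (ha : a ∈ s) (ha0 : 0 < a)
    (h : (s.map fun k => 1 - (X : ℤ[X]) ^ k).prod = (t.map fun k => 1 - (X : ℤ[X]) ^ k).prod) :
    ∃ b ∈ t, a ∣ b := by
  have hz := Complex.isPrimitiveRoot_exp a ha0.ne'
  set z := Complex.exp (2 * Real.pi * Complex.I / a)
  have h2 := congrArg (aeval z) h
  simp only [map_multiset_prod, Multiset.map_map, Function.comp_def, map_sub, map_one, map_pow,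
    aeval_X] at h2
  have h0 : (s.map fun k => 1 - z ^ k).prod = 0 :=
    Multiset.prod_eq_zero (Multiset.mem_map.2 ⟨a, ha, by simp [hz.pow_eq_one]⟩)
  rw [h0] at h2
  obtain ⟨b, hb, hb0⟩ := Multiset.mem_map.1 (Multiset.prod_eq_zero_iff.1 h2.symm)
  exact ⟨b, hb, hz.dvd_of_pow_eq_one b (sub_eq_zero.1 hb0).symm⟩

open Polynomial in
lemma one_sub_X_pow_ne_zero {a : ℕ} (ha : 0 < a) : 1 - (X : ℤ[X]) ^ a ≠ 0 := by
  intro h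
  have := congrArg (eval 0) h
  simp [ha.ne'] at this

open Polynomial in
/-- The multiset of positive exponents is determined by the product `∏ (1 - X ^ a)`. -/
lemma prod_one_sub_X_pow_injective (s t : Multiset ℕ) (hs : ∀ x ∈ s, 0 < x) (ht : ∀ x ∈ t, 0 < x)
    (h : (s.map fun k => 1 - (X : ℤ[X]) ^ k).prod = (t.map fun k => 1 - (X : ℤ[X]) ^ k).prod) :
    s = t := by
  induction hn : s.card generalizing s t with
  | zero =>
    obtain rfl := Multiset.card_eq_zero.1 hn
    by_contra hne
    obtain ⟨a, ha⟩ := Multiset.exists_mem_of_ne_zero (Ne.symm hne)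
    obtain ⟨b, hb, -⟩ := exists_dvd_of_prod_eq ha (ht a ha) h.symm
    simp at hb
  | succ n ih =>
    have hne : (s + t).toFinset.Nonempty := by
      obtain ⟨a, ha⟩ := Multiset.card_pos_iff_exists_mem.1 (by omega : 0 < s.card)
      exact ⟨a, by simp [ha]⟩
    obtain ⟨a, ha, hmax⟩ := (s + t).toFinset.exists_max_image id hne
    simp only [Multiset.mem_toFinset, Multiset.mem_add, id] at ha hmax
    -- By maximality the only multiple of `a` among the exponents is `a` itself.
    have hboth : a ∈ s ∧ a ∈ t := by
      rcases ha with ha | ha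
      · obtain ⟨b, hb, hab⟩ := exists_dvd_of_prod_eq ha (hs a ha) h
        have := Nat.le_of_dvd (ht b hb) hab
        have := hmax b (Or.inr hb)
        obtain rfl : a = b := by omega
        exact ⟨ha, hb⟩
      · obtain ⟨b, hb, hab⟩ := exists_dvd_of_prod_eq ha (ht a ha) h.symm
        have := Nat.le_of_dvd (hs b hb) hab
        have := hmax b (Or.inl hb)
        obtain rfl : a = b := by omega
        exact ⟨hb, ha⟩
    obtain ⟨s, rfl⟩ := Multiset.exists_cons_of_mem hboth.1
    obtain ⟨t, rfl⟩ := Multiset.exists_cons_of_mem hboth.2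
    simp only [Multiset.map_cons, Multiset.prod_cons] at h
    rw [ih s t (fun x hx => hs x (Multiset.mem_cons_of_mem hx))
      (fun x hx => ht x (Multiset.mem_cons_of_mem hx))
      (mul_left_cancel₀ (one_sub_X_pow_ne_zero (hs a hboth.1)) h) (by simpa using hn)]

lemma lt_of_lt_of_step {ℓ : ℕ} {m : ℕ → ℕ} (hmono : ∀ i, i < ℓ → m i < m (i + 1)) {i j : ℕ}
    (hij : i < j) (hj : j ≤ ℓ) : m i < m j := by
  induction j, hij using Nat.le_induction with
  | base => exact hmono i hj
  | succ j _ ih => exact (ih (by omega)).trans (hmono j hj)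

/-- A number strictly between consecutive terms of an increasing tuple is not a term. -/
lemma ne_of_between {ℓ : ℕ} {m : ℕ → ℕ} (hmono : ∀ i, i < ℓ → m i < m (i + 1)) {i j x : ℕ}
    (hi : i + 1 ≤ ℓ) (hj : j ≤ ℓ) (h1 : m i < x) (h2 : x < m (i + 1)) : x ≠ m j := by
  rintro rfl
  rcases lt_trichotomy j i with h | rfl | h
  · have := lt_of_lt_of_step hmono h (by omega)
    omega
  · omega
  · rcases (show i + 1 ≤ j from h).eq_or_lt with h | h
    · subst h
      omega
    · have := lt_of_lt_of_step hmono h hj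
      omega

/-- Strictly increasing tuples with the same set of values coincide. -/
lemma tuple_eq_of_image_eq {ℓ ℓ' : ℕ} {m m' : ℕ → ℕ}
    (hmono : ∀ i, i < ℓ → m i < m (i + 1)) (hmono' : ∀ i, i < ℓ' → m' i < m' (i + 1))
    (h : (Finset.range (ℓ + 1)).image m = (Finset.range (ℓ' + 1)).image m') :
    ℓ = ℓ' ∧ ∀ i ≤ ℓ, m i = m' i := by
  have key : ∀ {k : ℕ} {f : ℕ → ℕ}, (∀ i, i < k → f i < f (i + 1)) →
      StrictMono (fun i : Fin (k + 1) => f i) := by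
    intro k f hf i j hij
    exact lt_of_lt_of_step hf hij (by omega)
  have card : ∀ {k : ℕ} {f : ℕ → ℕ}, (∀ i, i < k → f i < f (i + 1)) →
      ((Finset.range (k + 1)).image f).card = k + 1 := by
    intro k f hf
    rw [Finset.card_image_of_injOn, Finset.card_range]
    intro i hi j hj hij
    simp only [Finset.coe_range, Set.mem_Iio] at hi hj
    simpa using (key hf).injective (a₁ := ⟨i, hi⟩) (a₂ := ⟨j, hj⟩) hij
  have hl : ℓ = ℓ' := by
    have := card hmono
    rw [h, card hmono'] at this
    omega
  subst hl
  refine ⟨rfl, fun i hi => ?_⟩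
  have hr : Set.range (fun i : Fin (ℓ + 1) => m i) = Set.range (fun i : Fin (ℓ + 1) => m' i) := by
    ext x
    have := Finset.ext_iff.1 h x
    simpa [Fin.exists_iff] using this
  exact congrFun (((key hmono).range_inj (key hmono')).1 hr) ⟨i, by omega⟩

/-- If `A + M' = A' + M` as multisets of values and `A` misses `M`, then `M ⊆ M'`. -/
lemma mem_of_add_eq {A A' M M' : Multiset ℕ} (h : A + M' = A' + M)
    (hd : ∀ x ∈ A, x ∉ M) : ∀ x ∈ M, x ∈ M' := by
  intro x hx
  have : x ∈ A + M' := h ▸ Multiset.mem_add.2 (Or.inr hx)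
  exact (Multiset.mem_add.1 this).resolve_left fun hA => hd x hA hx


/-- the Poincaré series of a single divisorial valuation determines
its exponent data. Two tuples `m 0 < … < m ℓ` and `m' 0 < … < m' ℓ'` of positive
integers satisfying (for `1 ≤ i ≤ ℓ - 1`): `n i ≥ 2`,
`n i * m i ∈ ⟨m 0, …, m (i-1)⟩` and `m (i+1) > n i * m i` (and similarly for the
primed tuple), whose rational expressions
`∏_{i=1}^{ℓ-1}(1 - t^(n i * m i)) / ∏_{j=0}^{ℓ}(1 - t^(m j))` agree (after clearing
denominators, as polynomials over ℤ) must be equal.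
Here `e (i-1) = (Finset.range i).gcd m` and `n i = e (i-1) / e i`. -/
theorem stmt_7 (ℓ ℓ' : ℕ) (hℓ : 1 ≤ ℓ) (hℓ' : 1 ≤ ℓ') (m m' : ℕ → ℕ)
    (hpos : ∀ i ≤ ℓ, 0 < m i) (hpos' : ∀ i ≤ ℓ', 0 < m' i)
    (hmono : ∀ i, i < ℓ → m i < m (i + 1)) (hmono' : ∀ i, i < ℓ' → m' i < m' (i + 1))
    (hn2 : ∀ i, 1 ≤ i → i ≤ ℓ - 1 →
      2 ≤ (Finset.range i).gcd m / (Finset.range (i + 1)).gcd m)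
    (hn2' : ∀ i, 1 ≤ i → i ≤ ℓ' - 1 →
      2 ≤ (Finset.range i).gcd m' / (Finset.range (i + 1)).gcd m')
    (htel : ∀ i, 1 ≤ i → i ≤ ℓ - 1 →
      ((Finset.range i).gcd m / (Finset.range (i + 1)).gcd m) * m i ∈
        AddSubmonoid.closure (m '' Set.Iio i))
    (htel' : ∀ i, 1 ≤ i → i ≤ ℓ' - 1 →
      ((Finset.range i).gcd m' / (Finset.range (i + 1)).gcd m') * m' i ∈
        AddSubmonoid.closure (m' '' Set.Iio i))
    (hgap : ∀ i, 1 ≤ i → i ≤ ℓ - 1 →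
      ((Finset.range i).gcd m / (Finset.range (i + 1)).gcd m) * m i < m (i + 1))
    (hgap' : ∀ i, 1 ≤ i → i ≤ ℓ' - 1 →
      ((Finset.range i).gcd m' / (Finset.range (i + 1)).gcd m') * m' i < m' (i + 1))
    (heq :
      (∏ i ∈ Finset.Icc 1 (ℓ - 1), (1 - (Polynomial.X : Polynomial ℤ) ^
          (((Finset.range i).gcd m / (Finset.range (i + 1)).gcd m) * m i))) *
        ∏ j ∈ Finset.range (ℓ' + 1), (1 - (Polynomial.X : Polynomial ℤ) ^ m' j) =
      (∏ i ∈ Finset.Icc 1 (ℓ' - 1), (1 - (Polynomial.X : Polynomial ℤ) ^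
          (((Finset.range i).gcd m' / (Finset.range (i + 1)).gcd m') * m' i))) *
        ∏ j ∈ Finset.range (ℓ + 1), (1 - (Polynomial.X : Polynomial ℤ) ^ m j)) :
    ℓ = ℓ' ∧ ∀ i ≤ ℓ, m i = m' i := by
  set a : ℕ → ℕ := fun i => ((Finset.range i).gcd m / (Finset.range (i + 1)).gcd m) * m i with ha
  set a' : ℕ → ℕ := fun i =>
    ((Finset.range i).gcd m' / (Finset.range (i + 1)).gcd m') * m' i with ha'
  have hlow : ∀ i, 1 ≤ i → i ≤ ℓ - 1 → m i < a i := fun i h1 h2 =>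
    lt_mul_left (hpos i (by omega)) (hn2 i h1 h2)
  have hlow' : ∀ i, 1 ≤ i → i ≤ ℓ' - 1 → m' i < a' i := fun i h1 h2 =>
    lt_mul_left (hpos' i (by omega)) (hn2' i h1 h2)
  have hms : (Finset.Icc 1 (ℓ - 1)).val.map a + (Finset.range (ℓ' + 1)).val.map m' =
      (Finset.Icc 1 (ℓ' - 1)).val.map a' + (Finset.range (ℓ + 1)).val.map m := by
    apply prod_one_sub_X_pow_injective
    · intro x hx
      simp only [Multiset.mem_add, Multiset.mem_map, Finset.mem_val, Finset.mem_Icc,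
        Finset.mem_range] at hx
      rcases hx with ⟨i, hi, rfl⟩ | ⟨i, hi, rfl⟩
      · exact (Nat.zero_le _).trans_lt (hlow i hi.1 hi.2)
      · exact hpos' i (by omega)
    · intro x hx
      simp only [Multiset.mem_add, Multiset.mem_map, Finset.mem_val, Finset.mem_Icc,
        Finset.mem_range] at hx
      rcases hx with ⟨i, hi, rfl⟩ | ⟨i, hi, rfl⟩
      · exact (Nat.zero_le _).trans_lt (hlow' i hi.1 hi.2)
      · exact hpos i (by omega)
    · simp only [Multiset.map_add, Multiset.prod_add, Multiset.map_map]
      exact heq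
  have hd : ∀ x ∈ (Finset.Icc 1 (ℓ - 1)).val.map a, x ∉ (Finset.range (ℓ + 1)).val.map m := by
    intro x hx hx'
    simp only [Multiset.mem_map, Finset.mem_val, Finset.mem_Icc, Finset.mem_range] at hx hx'
    obtain ⟨i, hi, rfl⟩ := hx
    obtain ⟨j, hj, hij⟩ := hx'
    exact ne_of_between hmono (by omega) (by omega) (hlow i hi.1 hi.2) (hgap i hi.1 hi.2) hij.symm
  have hd' : ∀ x ∈ (Finset.Icc 1 (ℓ' - 1)).val.map a',
      x ∉ (Finset.range (ℓ' + 1)).val.map m' := by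
    intro x hx hx'
    simp only [Multiset.mem_map, Finset.mem_val, Finset.mem_Icc, Finset.mem_range] at hx hx'
    obtain ⟨i, hi, rfl⟩ := hx
    obtain ⟨j, hj, hij⟩ := hx'
    exact ne_of_between hmono' (by omega) (by omega) (hlow' i hi.1 hi.2) (hgap' i hi.1 hi.2)
      hij.symm
  refine tuple_eq_of_image_eq hmono hmono' (Finset.ext fun x => ?_)
  have h1 := mem_of_add_eq hms hd x
  have h2 := mem_of_add_eq hms.symm hd' x
  simp only [Multiset.mem_map, Finset.mem_val] at h1 h2
  simpa only [Finset.mem_image] using Iff.intro h1 h2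
end
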